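/- arXiv:2103.00618 — 3 statements merged into one kernel-verified Lean document; each statement's English description precedes it below -/
import Mathlib

section
/- Let U be a unicyclic graph and let a, b, c, d be four distinct vertices with ab ∈ E(Cycles(U)), cd ∈ E(Forest(U)), and ac, bd ∉ E(U), so that τ = (a b / c d) is a nontrivial 2-switch on U. Then τ(U) is unicyclic. -/
/-!
A graph `G` with an edge `uv` such that `G - uv` is a tree is unicyclic
(`unicyclic_of_isTree_deleteEdges`): connectedness of `G - uv` gives a cycle through `uv`, and every
cycle subgraph uses `uv` because `G - uv` is acyclic. If an edge `xy` lay on one cycle subgraph but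
not on another, then `G - xy` would be connected with `uv` still on a cycle, so `G - xy - uv` would
be connected, contradicting that `xy` is a bridge of the tree `G - uv`.

For unicyclic `U`, deleting the cycle edge `ab` gives a tree `T`, and `cd` is a bridge of `T`. As
`cd` is not on the cycle, `a` and `b` lie in the same component of `F := T - cd`. If this is the
component of `c`, then `F + bd` is a tree and the switched graph is this tree plus the edge `ac`;
if it is the component of `d`, then `F + ac` is a tree and the switched graph is this tree plus
`bd`.
-/

open SimpleGraph

variable {V : Type*}

/-- The 2-switch (a b / c d): delete the edges ab, cd and add the edges ac, bd. -/
def twoSwitch (G : SimpleGraph V) (a b c d : V) : SimpleGraph V :=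
  (G.deleteEdges {s(a, b), s(c, d)}) ⊔ SimpleGraph.fromEdgeSet {s(a, c), s(b, d)}

/-- τ = (a b / c d) is a nontrivial 2-switch on `G`: the four vertices are distinct,
`ab, cd ∈ E(G)` and `ac, bd ∉ E(G)`. -/
def IsNontrivialSwitch (G : SimpleGraph V) (a b c d : V) : Prop :=
  [a, b, c, d].Nodup ∧ G.Adj a b ∧ G.Adj c d ∧ ¬ G.Adj a c ∧ ¬ G.Adj b d

/-- A cycle subgraph: a subgraph isomorphic to a cycle graph, i.e. a subgraph that is
connected and 2-regular (every vertex of the subgraph has exactly two neighbours in it). -/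
def IsCycleSubgraph (G : SimpleGraph V) (H : G.Subgraph) : Prop :=
  H.coe.Connected ∧ ∀ v ∈ H.verts, (H.neighborSet v).ncard = 2

/-- A graph is unicyclic if it is connected and contains exactly one cycle subgraph. -/
def Unicyclic (G : SimpleGraph V) : Prop :=
  G.Connected ∧ ∃! H : G.Subgraph, IsCycleSubgraph G H

/-- `Cycles(G)`: the subgraph formed by all vertices and edges of `G` lying on some cycle. -/
def cyclesSub (G : SimpleGraph V) : G.Subgraph :=
  sSup {H | IsCycleSubgraph G H}

/-- `Forest(G) := G − E(Cycles(G))`. -/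
def forestPart (G : SimpleGraph V) : SimpleGraph V :=
  G.deleteEdges (cyclesSub G).edgeSet

/-- A pseudoforest: every connected component contains at most one cycle subgraph, i.e. any
two cycle subgraphs lying in the same connected component coincide. -/
def Pseudoforest (G : SimpleGraph V) : Prop :=
  ∀ H₁ H₂ : G.Subgraph, IsCycleSubgraph G H₁ → IsCycleSubgraph G H₂ →
    (∃ u ∈ H₁.verts, ∃ v ∈ H₂.verts, G.Reachable u v) → H₁ = H₂

/-- `cycles(G)`: the number of cycle subgraphs of `G`. -/
noncomputable def numCycles (G : SimpleGraph V) : ℕ :=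
  {H : G.Subgraph | IsCycleSubgraph G H}.ncard

/-- `κ(G)`: the number of connected components of `G`. -/
noncomputable def numComponents (G : SimpleGraph V) : ℕ :=
  Nat.card G.ConnectedComponent

/-- `G'` is obtained from `G` by a nontrivial 2-switch. -/
def SwitchStep (G G' : SimpleGraph V) : Prop :=
  ∃ a b c d : V, IsNontrivialSwitch G a b c d ∧ G' = twoSwitch G a b c d

/-- A cycle graph: a connected 2-regular graph. -/
def IsCycleGraph (G : SimpleGraph V) : Prop :=
  G.Connected ∧ ∀ v : V, (G.neighborSet v).ncard = 2

/-- `ℓ` is a leaf shared by `G` and `H`: it has degree one in both and its unique incident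
edge is common to both graphs. -/
def SharedLeaf (G H : SimpleGraph V) : Prop :=
  ∃ ℓ v : V, (G.neighborSet ℓ).ncard = 1 ∧ (H.neighborSet ℓ).ncard = 1 ∧
    G.Adj ℓ v ∧ H.Adj ℓ v

lemma IsCycleSubgraph.isCycles {G : SimpleGraph V} {H : G.Subgraph} (h : IsCycleSubgraph G H) :
    H.spanningCoe.IsCycles := by
  rintro v ⟨w, hw⟩
  exact h.2 v (H.edge_vert hw)

/-- An edge of a cycle subgraph is not a bridge in any graph containing that subgraph. -/
lemma IsCycleSubgraph.not_isBridge [Finite V] {G G' : SimpleGraph V} {H : G.Subgraph}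
    (h : IsCycleSubgraph G H) (hle : H.spanningCoe ≤ G') {x y : V} (hxy : H.Adj x y) :
    ¬ G'.IsBridge s(x, y) := fun hb =>
  hb.anti hle (h.isCycles.reachable_deleteEdges (G := H.spanningCoe) hxy)

lemma SimpleGraph.Walk.IsCycle.isCycleSubgraph {G : SimpleGraph V} {u : V} {p : G.Walk u u}
    (hp : p.IsCycle) : IsCycleSubgraph G p.toSubgraph :=
  ⟨p.toSubgraph_connected.coe, fun _ hv =>
    hp.ncard_neighborSet_toSubgraph_eq_two (p.mem_verts_toSubgraph.mp hv)⟩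

/-- Every vertex of a cycle subgraph has an incident edge, so adjacency determines containment. -/
lemma IsCycleSubgraph.le_of_adj {G : SimpleGraph V} {H₁ H₂ : G.Subgraph}
    (h : IsCycleSubgraph G H₁) (hadj : ∀ x y, H₁.Adj x y → H₂.Adj x y) : H₁ ≤ H₂ := by
  refine ⟨fun v hv => ?_, fun x y => hadj x y⟩
  obtain ⟨w, hw⟩ : (H₁.neighborSet v).Nonempty :=
    Set.nonempty_of_ncard_ne_zero (by rw [h.2 v hv]; decide)
  exact H₂.edge_vert (hadj v w hw)

lemma IsCycleSubgraph.exists_adj {G : SimpleGraph V} {H : G.Subgraph}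
    (h : IsCycleSubgraph G H) : ∃ x y, H.Adj x y := by
  obtain ⟨v, hv⟩ := h.1.nonempty
  obtain ⟨w, hw⟩ : (H.neighborSet v).Nonempty :=
    Set.nonempty_of_ncard_ne_zero (by rw [h.2 v hv]; decide)
  exact ⟨v, w, hw⟩

lemma SimpleGraph.Subgraph.spanningCoe_le_deleteEdges {G : SimpleGraph V} {H : G.Subgraph}
    {x y : V} (h : ¬ H.Adj x y) : H.spanningCoe ≤ G.deleteEdges {s(x, y)} := by
  intro p q hpq
  rw [SimpleGraph.deleteEdges_adj]
  refine ⟨H.adj_sub hpq, fun he => h ?_⟩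
  have : s(p, q) ∈ H.edgeSet := hpq
  rw [Set.mem_singleton_iff.mp he] at this
  exact this

/-- A tree plus one edge is unicyclic. -/
lemma unicyclic_of_isTree_deleteEdges [Finite V] {G : SimpleGraph V} {u v : V}
    (hadj : G.Adj u v) (hT : (G.deleteEdges {s(u, v)}).IsTree) : Unicyclic G := by
  have hconn : G.Connected := hT.connected.mono (deleteEdges_le _)
  have hbridge := isAcyclic_iff_forall_isBridge.mp hT.isAcyclic
  have huv : ∀ H : G.Subgraph, IsCycleSubgraph G H → H.Adj u v := by
    intro H hH
    by_contra hn
    have hle := Subgraph.spanningCoe_le_deleteEdges hn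
    obtain ⟨x, y, hxy⟩ := hH.exists_adj
    exact hH.not_isBridge hle hxy (hbridge (e := s(x, y)) (hle hxy))
  have hsub : ∀ H₁ H₂ : G.Subgraph, IsCycleSubgraph G H₁ → IsCycleSubgraph G H₂ → H₁ ≤ H₂ := by
    intro H₁ H₂ h₁ h₂
    refine h₁.le_of_adj fun x y hxy => ?_
    by_contra hn
    have hc : (G.deleteEdges {s(x, y)}).Connected :=
      hconn.connected_delete_edge_of_not_isBridge (h₁.not_isBridge H₁.spanningCoe_le hxy)
    have hc' := hc.connected_delete_edge_of_not_isBridge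
      (h₂.not_isBridge (Subgraph.spanningCoe_le_deleteEdges hn) (huv H₂ h₂))
    have hne : s(x, y) ≠ s(u, v) := by
      intro he
      have : s(u, v) ∈ H₂.edgeSet := huv H₂ h₂
      rw [← he] at this
      exact hn this
    have hb := hbridge (e := s(x, y)) (by
      rw [mem_edgeSet, deleteEdges_adj]
      exact ⟨H₁.adj_sub hxy, hne⟩)
    rw [isBridge_iff] at hb
    apply hb
    rw [deleteEdges_deleteEdges, Set.union_comm, ← deleteEdges_deleteEdges]
    exact hc' x y
  obtain ⟨w, p, hp, -⟩ := adj_and_reachable_delete_edges_iff_exists_cycle.mp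
    ⟨hadj, hT.connected u v⟩
  exact ⟨hconn, p.toSubgraph, hp.isCycleSubgraph, fun H hH =>
    le_antisymm (hsub _ _ hH hp.isCycleSubgraph) (hsub _ _ hp.isCycleSubgraph hH)⟩

lemma IsCycleSubgraph.isTree_deleteEdges [Finite V] {U : SimpleGraph V} (hU : Unicyclic U)
    {C : U.Subgraph} (hC : IsCycleSubgraph U C) {a b : V} (hab : C.Adj a b) :
    (U.deleteEdges {s(a, b)}).IsTree := by
  refine ⟨hU.1.connected_delete_edge_of_not_isBridge (hC.not_isBridge C.spanningCoe_le hab), ?_⟩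
  intro w p hp
  have hle : U.deleteEdges {s(a, b)} ≤ U := deleteEdges_le _
  have hp' : (p.mapLe hle).IsCycle := hp.mapLe hle
  have heq := hU.2.unique hC hp'.isCycleSubgraph
  rw [heq, ← Subgraph.mem_edgeSet, Walk.mem_edges_toSubgraph, Walk.edges_mapLe_eq_edges] at hab
  have := p.edges_subset_edgeSet hab
  simp at this

/-- Removing the edge `cd` from a connected graph leaves every vertex joined to `c` or to `d`. -/
lemma reachable_or_of_deleteEdges {T : SimpleGraph V} (hT : T.Connected) (c d w : V) :
    (T.deleteEdges {s(c, d)}).Reachable w c ∨ (T.deleteEdges {s(c, d)}).Reachable w d := by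
  obtain ⟨p⟩ := hT w c
  generalize hc : c = z at p
  induction p with
  | nil => exact Or.inl (hc ▸ Reachable.refl _)
  | @cons x y z h p ih =>
    by_cases he : s(x, y) = s(c, d)
    · rcases Sym2.eq_iff.mp he with ⟨rfl, -⟩ | ⟨rfl, -⟩
      · subst hc; exact Or.inl (Reachable.refl _)
      · exact Or.inr (Reachable.refl _)
    · have hadj : (T.deleteEdges {s(c, d)}).Adj x y := by
        rw [deleteEdges_adj]; exact ⟨h, he⟩
      subst hc
      exact (ih rfl).imp hadj.reachable.trans hadj.reachable.trans

/-- Edge exchange in a tree: the edge `cd` may be replaced by `xd` whenever `x` lies on the side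
of `c`. -/
lemma isTree_exchange {T : SimpleGraph V} (hT : T.IsTree) {c d x : V} (hcd : T.Adj c d)
    (hx : (T.deleteEdges {s(c, d)}).Reachable x c) :
    (T.deleteEdges {s(c, d)} ⊔ edge x d).IsTree := by
  have hb : ¬ (T.deleteEdges {s(c, d)}).Reachable c d :=
    isBridge_iff.mp (isAcyclic_iff_forall_isBridge.mp hT.isAcyclic (e := s(c, d)) hcd)
  have hxd : ¬ (T.deleteEdges {s(c, d)}).Reachable x d := fun h => hb (hx.symm.trans h)
  refine ⟨?_, (hT.isAcyclic.anti (deleteEdges_le _)).sup_edge_of_not_reachable hxd⟩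
  have hne : x ≠ d := by rintro rfl; exact hxd (Reachable.refl _)
  have hle : T.deleteEdges {s(c, d)} ≤ T.deleteEdges {s(c, d)} ⊔ edge x d := le_sup_left
  have hadj : (T.deleteEdges {s(c, d)} ⊔ edge x d).Adj x d := by
    simp [edge_adj, hne]
  refine (connected_iff_exists_forall_reachable _).2 ⟨d, fun w => Reachable.symm ?_⟩
  rcases reachable_or_of_deleteEdges hT.connected c d w with h | h
  · exact ((h.trans hx.symm).mono hle).trans hadj.reachable
  · exact h.mono hle

/-- a nontrivial 2-switch on a unicyclic graph U between an edge of Cycles(U)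
and an edge of Forest(U) yields a unicyclic graph. -/
theorem stmt3 {V : Type*} [Fintype V] (U : SimpleGraph V) (hU : Unicyclic U)
    (a b c d : V) (hdist : [a, b, c, d].Nodup)
    (hab : (cyclesSub U).Adj a b) (hcd : (forestPart U).Adj c d)
    (hac : ¬ U.Adj a c) (hbd : ¬ U.Adj b d) :
    Unicyclic (twoSwitch U a b c d) := by
  obtain ⟨C, hC, hCab⟩ : ∃ C : U.Subgraph, IsCycleSubgraph U C ∧ C.Adj a b := by
    simpa [cyclesSub, Subgraph.sSup_adj] using hab
  obtain ⟨hUcd, hncyc⟩ : U.Adj c d ∧ ¬ (cyclesSub U).Adj c d := by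
    simpa [forestPart, deleteEdges_adj] using hcd
  have hCcd : ¬ C.Adj c d := fun h => hncyc (by
    rw [cyclesSub, Subgraph.sSup_adj]; exact ⟨C, hC, h⟩)
  have hT := hC.isTree_deleteEdges hU hCab
  simp only [List.nodup_cons, List.mem_cons, List.not_mem_nil, or_false, not_or] at hdist
  obtain ⟨⟨nab, nac, nad⟩, ⟨nbc, nbd⟩, ncd, -⟩ := hdist
  have hTcd : (U.deleteEdges {s(a, b)}).Adj c d := by
    rw [deleteEdges_adj]; refine ⟨hUcd, ?_⟩; simp; grind
  -- The rest of the cycle joins `a` to `b` while avoiding both deleted edges.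
  have hreach : ((U.deleteEdges {s(a, b)}).deleteEdges {s(c, d)}).Reachable a b := by
    refine (hC.isCycles.reachable_deleteEdges (G := C.spanningCoe) hCab).mono ?_
    rw [deleteEdges_deleteEdges, Set.union_comm, ← deleteEdges_deleteEdges]
    exact deleteEdges_mono (Subgraph.spanningCoe_le_deleteEdges hCcd)
  rcases reachable_or_of_deleteEdges hT.connected c d a with h | h
  · refine unicyclic_of_isTree_deleteEdges (u := a) (v := c) (by simp [twoSwitch, nac]) ?_
    convert isTree_exchange hT hTcd (hreach.symm.trans h) using 1
    ext x y
    simp only [twoSwitch, deleteEdges_adj, sup_adj, fromEdgeSet_adj, edge_adj, Set.mem_insert_iff,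
      Set.mem_singleton_iff, Sym2.eq_iff]
    grind [SimpleGraph.Adj.symm]
  · refine unicyclic_of_isTree_deleteEdges (u := b) (v := d) (by simp [twoSwitch, nbd]) ?_
    rw [Sym2.eq_swap (a := c)] at h
    convert isTree_exchange hT hTcd.symm h using 1
    ext x y
    simp only [twoSwitch, deleteEdges_adj, sup_adj, fromEdgeSet_adj, edge_adj, Set.mem_insert_iff,
      Set.mem_singleton_iff, Sym2.eq_iff]
    grind [SimpleGraph.Adj.symm]
end

section
/- Let U be a unicyclic graph with a vertex ℓ of degree 1 and an edge ℓu ∈ E(U) such that u is a vertex of Cycles(U). Then for every vertex v with v ∉ V(Cycles(U)) and deg_U(v) ≥ 2, there exists a nontrivial 2-switch τ on U such that τ(U) is unicyclic and ℓv ∈ E(τ(U)). -/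
/-!
The switch is `(ℓ u / v w)`, where `w` is a neighbour of `v` lying away from the cycle: `w` is not
the second vertex of some path from `v` to `u`, so `v` still reaches `u` after deleting `vw`. Since `v`
is on no cycle, `vw` is a bridge; hence `w` is cut off from `u` and in particular not adjacent to it.

The switch is a composition of two bridge exchanges: `vw` is replaced by `uw`, and then the pendant
edge `ℓu` is replaced by `ℓv`. Each exchange deletes a bridge and joins the two resulting sides
by another edge. No cycle subgraph uses a bridge, so this keeps connectedness and the set of cycle
subgraphs, hence unicyclicity (`unicyclic_exchange`).
-/

open SimpleGraph

variable {V : Type*}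

/-- A subgraph of `G` whose edges all belong to `G'`, seen as a subgraph of `G'`. -/
def transferSub {G G' : SimpleGraph V} (H : G.Subgraph)
    (h : ∀ a b, H.Adj a b → G'.Adj a b) : G'.Subgraph where
  verts := H.verts
  Adj := H.Adj
  adj_sub := fun {a b} hab => h a b hab
  edge_vert := H.edge_vert
  symm := H.symm

lemma isCycleSubgraph_transferSub {G G' : SimpleGraph V} {H : G.Subgraph}
    (h : ∀ a b, H.Adj a b → G'.Adj a b) (hH : IsCycleSubgraph G H) :
    IsCycleSubgraph G' (transferSub H h) := hH

lemma existsUnique_cycle_transfer {G G' : SimpleGraph V}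
    (h : ∀ H, IsCycleSubgraph G H → ∀ a b, H.Adj a b → G'.Adj a b)
    (h' : ∀ H, IsCycleSubgraph G' H → ∀ a b, H.Adj a b → G.Adj a b)
    (hG : ∃! H : G.Subgraph, IsCycleSubgraph G H) :
    ∃! H : G'.Subgraph, IsCycleSubgraph G' H := by
  obtain ⟨H, hH, huniq⟩ := hG
  refine ⟨transferSub H (h H hH), isCycleSubgraph_transferSub _ hH, fun K hK => ?_⟩
  have e := huniq _ (isCycleSubgraph_transferSub (h' K hK) hK)
  subst e
  rfl

/-- A cycle subgraph does not use an edge joining two different components of `F`: in a 2-regular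
finite graph, the ends of an edge stay connected after deleting it. -/
lemma cycle_adj_of_not_reachable [Finite V] {F : SimpleGraph V} {x y : V}
    (hxy : ¬ F.Reachable x y) (H : (F ⊔ edge x y).Subgraph)
    (hH : IsCycleSubgraph _ H) (a b : V) (hab : H.Adj a b) : F.Adj a b := by
  by_contra hF
  have hcyc : H.spanningCoe.IsCycles := by
    rintro z ⟨z', hz'⟩
    exact hH.2 z (H.edge_vert hz')
  have hr := hcyc.reachable_deleteEdges (v := a) (w := b) hab
  have hle : H.spanningCoe.deleteEdges {s(a, b)} ≤ F := by
    intro c d hcd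
    have h1 := hcd.1
    have h2 := H.adj_sub h1
    have h3 := H.adj_sub hab
    have h4 := hcd.2
    simp only [sup_adj, edge_adj] at h2 h3
    simp at h4
    grind
  have hrF := hr.mono hle
  have h3 := H.adj_sub hab
  simp only [sup_adj, edge_adj] at h3
  rcases h3 with h3 | ⟨⟨rfl, rfl⟩ | ⟨rfl, rfl⟩, -⟩
  · exact hF h3
  · exact hxy hrF
  · exact hxy hrF.symm

lemma reachable_or_of_sup_edge {F : SimpleGraph V} {x y z : V}
    (h : (F ⊔ edge x y).Reachable z x) : F.Reachable z x ∨ F.Reachable z y := by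
  have key : ∀ s t (_ : (F ⊔ edge x y).Walk s t), t = x → F.Reachable s x ∨ F.Reachable s y := by
    intro s t p ht
    induction p with
    | nil => exact Or.inl (ht ▸ .rfl)
    | cons hadj p ih =>
      have ih := ih ht
      simp only [sup_adj, edge_adj] at hadj
      rcases hadj with hadj | ⟨⟨rfl, rfl⟩ | ⟨rfl, rfl⟩, -⟩
      · exact ih.imp hadj.reachable.trans hadj.reachable.trans
      · exact Or.inl .rfl
      · exact Or.inr .rfl
  obtain ⟨p⟩ := h
  exact key z x p rfl

/-- Bridge exchange: if `xy` joins two components of `F`, it may be replaced by any other edge `pq`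
joining the same two components. -/
lemma unicyclic_exchange [Finite V] {F : SimpleGraph V} {x y p q : V}
    (hxy : ¬ F.Reachable x y) (hp : F.Reachable x p) (hq : F.Reachable y q)
    (h : Unicyclic (F ⊔ edge x y)) : Unicyclic (F ⊔ edge p q) := by
  have hpq : ¬ F.Reachable p q := fun hr => hxy (hp.trans (hr.trans hq.symm))
  have hne : p ≠ q := fun e => hpq (e ▸ .rfl)
  refine ⟨?_, existsUnique_cycle_transfer ?_ ?_ h.2⟩
  · have hle : F ≤ F ⊔ edge p q := le_sup_left
    have hadj : (F ⊔ edge p q).Adj p q := by simp [edge_adj, hne]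
    have key : ∀ z, (F ⊔ edge p q).Reachable z x := by
      intro z
      rcases reachable_or_of_sup_edge (h.1.preconnected z x) with hz | hz
      · exact hz.mono hle
      · exact ((hz.trans hq).mono hle).trans (hadj.symm.reachable.trans (hp.symm.mono hle))
    have := h.1.nonempty
    exact ⟨fun a b => (key a).trans (key b).symm⟩
  · exact fun H hH a b hab => Or.inl (cycle_adj_of_not_reachable hxy H hH a b hab)
  · exact fun H hH a b hab => Or.inl (cycle_adj_of_not_reachable hpq H hH a b hab)

lemma deleteEdges_sup_edge {G : SimpleGraph V} {x y : V} (h : G.Adj x y) :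
    G.deleteEdges {s(x, y)} ⊔ edge x y = G := by
  ext a b
  have := h.ne
  have := h.symm
  simp only [sup_adj, edge_adj, deleteEdges_adj, Set.mem_singleton_iff, Sym2.eq_iff]
  grind

/-- Every edge at a vertex lying on no cycle is a bridge. -/
lemma not_reachable_of_notMem_cyclesSub {G : SimpleGraph V} {v w : V}
    (hv : v ∉ (cyclesSub G).verts) (hvw : G.Adj v w) :
    ¬ (G.deleteEdges {s(v, w)}).Reachable v w := by
  intro hr
  obtain ⟨z, p, hp, hmem⟩ := (adj_and_reachable_delete_edges_iff_exists_cycle).1 ⟨hvw, hr⟩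
  apply hv
  have hc : IsCycleSubgraph G p.toSubgraph :=
    ⟨p.toSubgraph_connected.coe, fun a ha =>
      hp.ncard_neighborSet_toSubgraph_eq_two ((p.mem_verts_toSubgraph).1 ha)⟩
  have : p.toSubgraph ≤ cyclesSub G := le_sSup hc
  exact this.1 ((p.mem_verts_toSubgraph).2 (p.fst_mem_support_of_mem_edges hmem))

/-- In a connected graph, a vertex `v ≠ u` of degree at least two has an edge whose removal does not disconnect
`v` from `u`. -/
lemma exists_adj_reachable_deleteEdges {G : SimpleGraph V} (hG : G.Connected) {u v : V}
    (hdv : 2 ≤ (G.neighborSet v).ncard) (huv : v ≠ u) :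
    ∃ w, G.Adj v w ∧ (G.deleteEdges {s(v, w)}).Reachable v u := by
  obtain ⟨p, hp⟩ := hG.exists_isPath v u
  cases p with
  | nil => exact absurd rfl huv
  | cons hadj p =>
    rename_i b
    rw [Walk.cons_isPath_iff] at hp
    obtain ⟨w, hw, hwb⟩ := Set.exists_ne_of_one_lt_ncard (by omega : 1 < (G.neighborSet v).ncard) b
    refine ⟨w, hw, ⟨(Walk.cons hadj p).toDeleteEdges _ ?_⟩⟩
    rintro e he rfl
    rw [Walk.edges_cons, List.mem_cons] at he
    rcases he with he | he
    · rw [Sym2.eq_iff] at he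
      have := hadj.ne
      grind
    · exact hp.2 (p.fst_mem_support_of_mem_edges he)

/-- if ℓ is a leaf of a unicyclic graph U with ℓu ∈ E(U) and u on the cycle,
then for every vertex v off the cycle with deg(v) ≥ 2 there is a nontrivial 2-switch τ on U
with τ(U) unicyclic and ℓv ∈ E(τ(U)). -/
theorem stmt8 {V : Type*} [Fintype V] (U : SimpleGraph V) (hU : Unicyclic U)
    (ℓ u : V) (hl : (U.neighborSet ℓ).ncard = 1) (hlu : U.Adj ℓ u)
    (hu : u ∈ (cyclesSub U).verts)
    (v : V) (hv : v ∉ (cyclesSub U).verts)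
    (hdv : 2 ≤ (U.neighborSet v).ncard) :
    ∃ a b c d : V, IsNontrivialSwitch U a b c d ∧
      Unicyclic (twoSwitch U a b c d) ∧ (twoSwitch U a b c d).Adj ℓ v := by
  have hvu : v ≠ u := fun e => hv (e ▸ hu)
  have hvl : v ≠ ℓ := by rintro rfl; omega
  have hleaf : ∀ z, U.Adj ℓ z → z = u := by
    obtain ⟨t, ht⟩ := Set.ncard_eq_one.1 hl
    have h1 : ∀ z, U.Adj ℓ z → z = t := fun z hz => by
      have : z ∈ U.neighborSet ℓ := hz
      simpa [ht] using this
    exact fun z hz => (h1 z hz).trans (h1 u hlu).symm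
  obtain ⟨w, hvw, hru⟩ := exists_adj_reachable_deleteEdges hU.1 hdv hvu
  have hbr := not_reachable_of_notMem_cyclesSub hv hvw
  have hwu : w ≠ u := by rintro rfl; exact hbr hru
  have hwl : w ≠ ℓ := by rintro rfl; exact hvu (hleaf v hvw.symm)
  have huw : ¬ U.Adj u w := by
    intro h
    apply hbr
    refine hru.trans (Adj.reachable ?_)
    simp only [deleteEdges_adj, Set.mem_singleton_iff, Sym2.eq_iff]
    grind
  have hlv : ¬ U.Adj ℓ v := fun h => hvu (hleaf v h)
  have hlu' := hlu.ne
  have hvw' := hvw.ne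
  refine ⟨ℓ, u, v, w, ⟨by simp; grind, hlu, hvw, hlv, huw⟩, ?_, ?_⟩
  · have h1 : Unicyclic (U.deleteEdges {s(v, w)} ⊔ edge u w) :=
      unicyclic_exchange hbr hru .rfl (by rwa [deleteEdges_sup_edge hvw])
    set G := U.deleteEdges {s(v, w)} ⊔ edge u w with hG
    have hGadj : ∀ a b, G.Adj a b ↔ (U.Adj a b ∧ ¬ s(a, b) = s(v, w)) ∨
        ((u = a ∧ w = b ∨ u = b ∧ w = a) ∧ a ≠ b) := by
      intro a b
      simp only [hG, sup_adj, edge_adj, deleteEdges_adj, Set.mem_singleton_iff]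
      grind
    have hGul : G.Adj u ℓ := by
      rw [hGadj, Sym2.eq_iff]
      have := hlu.symm
      grind
    -- `ℓ` is isolated in `G - uℓ`, as its only neighbour in `U` is `u`.
    have hiso : ∀ z, z ≠ ℓ → ¬ (G.deleteEdges {s(u, ℓ)}).Reachable z ℓ := by
      intro z hz ⟨p⟩
      cases p.reverse with
      | nil => exact hz rfl
      | cons h q =>
        rename_i t
        simp only [deleteEdges_adj, hGadj, Set.mem_singleton_iff, Sym2.eq_iff] at h
        have := hleaf t
        grind
    have hruv : (G.deleteEdges {s(u, ℓ)}).Reachable u v := by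
      have := reachable_or_of_sup_edge (F := G.deleteEdges {s(u, ℓ)}) (x := u) (y := ℓ) (z := v)
        (by rw [deleteEdges_sup_edge hGul]; exact h1.1.preconnected v u)
      exact (this.resolve_right (hiso v hvl)).symm
    have h2 : Unicyclic (G.deleteEdges {s(u, ℓ)} ⊔ edge v ℓ) :=
      unicyclic_exchange (hiso u hlu'.symm) hruv .rfl (by rwa [deleteEdges_sup_edge hGul])
    convert h2 using 1
    ext a b
    simp only [twoSwitch, sup_adj, edge_adj, deleteEdges_adj, hGadj, fromEdgeSet_adj,
      Set.mem_insert_iff, Set.mem_singleton_iff, Sym2.eq_iff]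
    grind
  · simp [twoSwitch, hvl.symm]
end

section
/- Let C be a cycle graph and let u and v be two non-adjacent vertices of C. Then there exists a nontrivial 2-switch τ on C such that τ(C) is unicyclic and uv ∈ E(τ(C)). -/
/-!
Run around the cycle `C` as `u = x₀, x₁, …, x_k = v, x_{k+1}, …, x_n = u`. The switch is
`(x₀ x₁ / x_k x_{k+1})`, which adds the edges `x₀x_k = uv` and `x₁x_{k+1}`. It is nontrivial
because a chord joining `x₁` to `x_{k+1}` has the same span `k` as the non-edge `uv`.
Each of the two arcs `x₁ … x_k` and `x_{k+1} … x_n` survives, and the new edge `x_k x_n` joins them,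
so the result is connected (`stmt11`). A 2-switch preserves degrees
(`ncard_neighborSet_twoSwitch`), so the result is again a cycle graph, and a finite cycle graph is
its own only cycle subgraph (`IsCycleGraph.unicyclic`).
-/

open SimpleGraph

variable {V : Type*}

/-- A cycle subgraph already uses both edges of `G` at each of its vertices, so its vertex set is
closed under adjacency and hence everything. -/
lemma IsCycleGraph.unicyclic {V : Type*} [Finite V] {G : SimpleGraph V} (h : IsCycleGraph G) :
    Unicyclic G := by
  refine ⟨h.1, ⊤, ⟨?_, ?_⟩, ?_⟩
  · exact (SimpleGraph.Subgraph.topIso (G := G)).connected_iff.2 h.1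
  · intro v _
    simpa using h.2 v
  · intro H ⟨hc, hd⟩
    have hN : ∀ v ∈ H.verts, H.neighborSet v = G.neighborSet v := fun v hv =>
      Set.eq_of_subset_of_ncard_le (H.neighborSet_subset v) (by rw [hd v hv, h.2 v])
        (Set.toFinite _)
    obtain ⟨⟨r, hr⟩⟩ := hc.nonempty
    have hall : ∀ v, v ∈ H.verts := by
      intro v
      obtain ⟨p⟩ := h.1.preconnected v r
      induction p with
      | nil => exact hr
      | cons hxy _ ih =>
        have hy := ih hr
        have := (Set.ext_iff.1 (hN _ hy) _).2 hxy.symm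
        exact H.edge_vert (SimpleGraph.Subgraph.Adj.symm this)
    ext x y
    · simp [hall x]
    · have := congrArg (y ∈ ·) (hN x (hall x))
      simpa using this

lemma twoSwitch_adj {V : Type*} (G : SimpleGraph V) (a b c d x y : V) :
    (twoSwitch G a b c d).Adj x y ↔
      (G.Adj x y ∧ s(x, y) ≠ s(a, b) ∧ s(x, y) ≠ s(c, d)) ∨
        ((s(x, y) = s(a, c) ∨ s(x, y) = s(b, d)) ∧ x ≠ y) := by
  simp [twoSwitch]

/-- At each of the four switched vertices one neighbour is exchanged for a non-neighbour;
elsewhere the neighbourhood is unchanged. -/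
lemma ncard_neighborSet_twoSwitch {V : Type*} [Finite V] {G : SimpleGraph V} {a b c d : V}
    (h : IsNontrivialSwitch G a b c d) (w : V) :
    ((twoSwitch G a b c d).neighborSet w).ncard = (G.neighborSet w).ncard := by
  obtain ⟨hnd, hab, hcd, hac, hbd⟩ := h
  simp only [List.nodup_cons, List.mem_cons, List.not_mem_nil, or_false, not_or] at hnd
  obtain ⟨⟨ab, ac, ad⟩, ⟨bc, bd⟩, cd, -⟩ := hnd
  have key : ∀ old new : V, G.Adj w old → ¬ G.Adj w new →
      (∀ y, (twoSwitch G a b c d).Adj w y ↔ y = new ∨ (G.Adj w y ∧ y ≠ old)) →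
      ((twoSwitch G a b c d).neighborSet w).ncard = (G.neighborSet w).ncard := by
    intro old new ho hn hy
    rw [← Set.ncard_exchange (s := G.neighborSet w) (a := new) (b := old) hn ho]
    congr 1
    ext y
    simp [hy]
  by_cases wa : w = a
  · subst wa
    refine key b c hab hac fun y => ?_
    simp only [twoSwitch_adj, Sym2.eq_iff, ne_eq]
    grind
  by_cases wb : w = b
  · subst wb
    refine key a d hab.symm hbd fun y => ?_
    simp only [twoSwitch_adj, Sym2.eq_iff, ne_eq]
    grind
  by_cases wc : w = c
  · subst wc
    refine key d a hcd (fun h => hac h.symm) fun y => ?_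
    simp only [twoSwitch_adj, Sym2.eq_iff, ne_eq]
    grind
  by_cases wd : w = d
  · subst wd
    refine key c b hcd.symm (fun h => hbd h.symm) fun y => ?_
    simp only [twoSwitch_adj, Sym2.eq_iff, ne_eq]
    grind
  congr 1
  ext y
  simp only [SimpleGraph.mem_neighborSet, twoSwitch_adj, Sym2.eq_iff, ne_eq]
  grind

/-- A cyclic enumeration `x₀ = u, x₁, …, x_n = u` of the vertices of a cycle graph. -/
lemma IsCycleGraph.exists_enum {V : Type*} [Finite V] {C : SimpleGraph V} (hC : IsCycleGraph C)
    (u : V) : ∃ (n : ℕ) (f : ℕ → V), 3 ≤ n ∧ f 0 = u ∧ f n = u ∧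
      (∀ i < n, C.Adj (f i) (f (i + 1))) ∧
      (∀ i j, 1 ≤ i → i ≤ n → 1 ≤ j → j ≤ n → f i = f j → i = j) ∧
      (∀ w, ∃ i, 1 ≤ i ∧ i ≤ n ∧ f i = w) := by
  have hcyc : C.IsCycles := fun v _ => hC.2 v
  have hne : (C.neighborSet u).Nonempty :=
    Set.nonempty_of_ncard_ne_zero (by rw [hC.2 u]; norm_num)
  obtain ⟨p, hp, hv⟩ := hcyc.exists_cycle_toSubgraph_verts_eq_connectedComponentSupp
    (c := C.connectedComponentMk u) (v := u) rfl hne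
  refine ⟨p.length, p.getVert, hp.three_le_length, p.getVert_zero, p.getVert_length,
    fun i hi => p.adj_getVert_succ hi, ?_, ?_⟩
  · intro i j hi hi' hj hj' h
    exact hp.getVert_injOn ⟨hi, hi'⟩ ⟨hj, hj'⟩ h
  · intro w
    have hw : w ∈ p.toSubgraph.verts := by
      rw [hv]
      exact SimpleGraph.ConnectedComponent.sound (hC.1.preconnected w u)
    rw [SimpleGraph.Walk.mem_verts_toSubgraph, SimpleGraph.Walk.mem_support_iff_exists_getVert]
      at hw
    obtain ⟨i, hi, hin⟩ := hw
    rcases Nat.eq_zero_or_pos i with rfl | hpos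
    · refine ⟨p.length, by have := hp.three_le_length; omega, le_rfl, ?_⟩
      rw [← hi, p.getVert_length, p.getVert_zero]
    · exact ⟨i, hpos, hin, hi⟩

/-- if u and v are distinct non-adjacent vertices of a cycle graph C, then
there is a nontrivial 2-switch τ on C with τ(C) unicyclic and uv ∈ E(τ(C)). -/
theorem stmt11 {V : Type*} [Fintype V] (C : SimpleGraph V) (hC : IsCycleGraph C)
    (u v : V) (huv : u ≠ v) (hadj : ¬ C.Adj u v) :
    ∃ a b c d : V, IsNontrivialSwitch C a b c d ∧
      Unicyclic (twoSwitch C a b c d) ∧ (twoSwitch C a b c d).Adj u v := by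
  obtain ⟨n, f, hn, f0, fn, hf, inj, surj⟩ := hC.exists_enum u
  obtain ⟨k, hk1, hkn, rfl⟩ := surj v
  have hk_ne_n : k ≠ n := by rintro rfl; exact huv fn.symm
  have hk_ne_one : k ≠ 1 := by
    rintro rfl
    exact hadj (f0 ▸ hf 0 (by omega))
  have hk_ne_pred : k + 1 ≠ n := by
    intro h
    have := hf k (by omega)
    rw [h, fn] at this
    exact hadj this.symm
  have hnbr : C.neighborSet (f 1) = {u, f 2} := by
    have hne : u ≠ f 2 := fun h => by
      have := inj n 2 (by omega) le_rfl (by omega) (by omega) (fn.trans h)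
      omega
    refine (Set.eq_of_subset_of_ncard_le ?_ ?_ (Set.toFinite _)).symm
    · have h01 := hf 0 (by omega)
      rw [f0] at h01
      rintro x (rfl | rfl)
      exacts [h01.symm, hf 1 (by omega)]
    · rw [hC.2, Set.ncard_pair hne]
  have hsw : IsNontrivialSwitch C u (f 1) (f k) (f (k + 1)) := by
    refine ⟨?_, f0 ▸ hf 0 (by omega), hf k (by omega), hadj, ?_⟩
    · have h1 := inj n 1
      have h2 := inj n (k + 1)
      have h3 := inj 1 k
      have h4 := inj 1 (k + 1)
      have h5 := inj k (k + 1)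
      simp only [List.nodup_cons, List.mem_cons, List.not_mem_nil, or_false, not_or]
      grind
    · intro h
      have h' : f (k + 1) ∈ C.neighborSet (f 1) := h
      rw [hnbr] at h'
      rcases h' with h' | h'
      · have := inj (k + 1) n (by omega) (by omega) (by omega) le_rfl (h'.trans fn.symm)
        omega
      · have := inj (k + 1) 2 (by omega) (by omega) (by omega) (by omega) h'
        omega
  refine ⟨u, f 1, f k, f (k + 1), hsw, ?_, (twoSwitch_adj ..).2 (Or.inr ⟨Or.inl rfl, huv⟩)⟩
  refine IsCycleGraph.unicyclic ⟨?_, fun w => (ncard_neighborSet_twoSwitch hsw w).trans (hC.2 w)⟩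
  set T := twoSwitch C u (f 1) (f k) (f (k + 1)) with hT
  have hkeep : ∀ i, 1 ≤ i → i < n → i ≠ k → T.Adj (f i) (f (i + 1)) := by
    intro i hi hin hik
    refine (twoSwitch_adj ..).2 (Or.inl ⟨hf i hin, ?_, ?_⟩)
    · rw [← fn, ne_eq, Sym2.eq_iff]
      rintro (⟨h, -⟩ | ⟨h, h'⟩)
      · have := inj i n hi hin.le (by omega) le_rfl h
        omega
      · have := inj i 1 hi hin.le le_rfl (by omega) h
        have := inj (i + 1) n (by omega) hin (by omega) le_rfl h'
        omega
    · rw [ne_eq, Sym2.eq_iff]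
      rintro (⟨h, -⟩ | ⟨h, h'⟩)
      · exact hik (inj i k hi hin.le hk1 hkn h)
      · have := inj i (k + 1) hi hin.le (by omega) (by omega) h
        have := inj (i + 1) k (by omega) hin hk1 hkn h'
        omega
  have huvT : T.Adj u (f k) := (twoSwitch_adj ..).2 (Or.inr ⟨Or.inl rfl, huv⟩)
  -- Following indices upwards along either arc reaches its end `f k` or `f n = u`.
  have hreach : ∀ i, i ≤ n → 1 ≤ i → T.Reachable (f i) u := by
    intro i hin
    induction hin using Nat.decreasingInduction with
    | self => intro _; rw [fn]
    | of_succ i hin ih =>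
      intro hi
      by_cases hik : i = k
      · subst hik; exact huvT.symm.reachable
      · exact (hkeep i hi hin hik).reachable.trans (ih (by omega))
  have : Nonempty V := ⟨u⟩
  refine ⟨fun x y => ?_⟩
  obtain ⟨i, hi, hin, rfl⟩ := surj x
  obtain ⟨j, hj, hjn, rfl⟩ := surj y
  exact (hreach i hin hi).trans (hreach j hjn hj).symm
end
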